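/- Let t be a divisor of q−1 and let w be a divisor of q+1. Let L̄ ≤ M_ℓ be a subgroup such that |L̄ ∩ Z| = w and L̄ is the internal direct product of L̄ ∩ Z and a subgroup D isomorphic to the dihedral group of order 2t. Then the number N of orbits of L̄ acting on O equals (q−1+3t)/(2t) + (q/2)·((q−1)/t)·((q+1)/w). -/

import Mathlib

/-!
The orbits are counted with Burnside's lemma. A Hermitian point is either affine, `(x : y : 1)` with
`x ^ (q + 1) - y ^ (q + 1) = 1`, or lies at infinity, `(1 : y : 0)` with `y ^ (q + 1) = 1`; there are
`q ^ 3 - q` points of the first kind and `q + 1` of the second. Write `L = Z_w × D` with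
`Z_w = L ∩ Z`.

* `D` has order `2t`, which is prime to `q + 1`, so its elements have determinant one
  (`special_of_pow_eq_one`). If `z * g` fixes an affine point, then the scalar of `z⁻¹` is an
  eigenvalue of `g` whose order divides `2t` and `q + 1`; hence `z = 1`, and `g`, fixing a
  nonisotropic vector with determinant one, is trivial (`eq_one_of_fixAff`). Thus `L` acts freely on
  the affine points.
* `Z_w` acts trivially at infinity. The fixed points at infinity of `[a, c, 1]` are the roots of norm
  one of `c ^ q * y ^ 2 + (a - a ^ q) * y - c`, so a nontrivial element of `D` has at most two
  (`ncard_fixInf_le_two`), and an involution has exactly one (`ncard_fixInf_involution`).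

If `S ≤ 2(t - 1)` denotes the total number of fixed points at infinity of the nontrivial rotations
of `D`, Burnside's lemma gives `2tw * N = q ^ 3 - q + w * (q + 1 + t + S)`. The value of `S` need
not be computed from eigenvalues: since `2tw` divides `q ^ 3 - q` and `(q - 1) / t` is odd, the
equation forces `2t ∣ S + 2`, so `S = 2(t - 1)` (`orbit_arith`).
-/


open Matrix

noncomputable def glAct {F : Type*} [Field F] (M : GL (Fin 3) F)
    (x : Projectivization F (Fin 3 → F)) : Projectivization F (Fin 3 → F) :=
  Projectivization.map
    ((LinearMap.GeneralLinearGroup.generalLinearEquiv F (Fin 3 → F)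
        (Matrix.GeneralLinearGroup.toLin M)).toLinearMap)
    ((LinearMap.GeneralLinearGroup.generalLinearEquiv F (Fin 3 → F)
        (Matrix.GeneralLinearGroup.toLin M)).injective) x

noncomputable def numOrbits {F : Type*} [Field F] (L : Subgroup (GL (Fin 3) F))
    (O : Set (Projectivization F (Fin 3 → F))) : ℕ :=
  Nat.card ((fun x => {y | ∃ g ∈ L, glAct g x = y}) '' O :
    Set (Set (Projectivization F (Fin 3 → F))))

def hermitianPts (q : ℕ) (F : Type*) [Field F] : Set (Projectivization F (Fin 3 → F)) :=
  {x | x.rep 1 ^ (q + 1) = x.rep 0 ^ (q + 1) - x.rep 2 ^ (q + 1)}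

def MlSet (q : ℕ) (F : Type*) [Field F] : Set (GL (Fin 3) F) :=
  {M | ∃ a c τ : F, a ^ (q + 1) - c ^ (q + 1) = 1 ∧ τ ^ (q + 1) = 1 ∧
    (M : Matrix (Fin 3) (Fin 3) F) = !![a, τ * c ^ q, 0; c, τ * a ^ q, 0; 0, 0, 1]}

def ZSet (q : ℕ) (F : Type*) [Field F] : Set (GL (Fin 3) F) :=
  {M | ∃ ε : F, ε ^ (q + 1) = 1 ∧ (M : Matrix (Fin 3) (Fin 3) F) = Matrix.diagonal ![ε, ε, 1]}


/-! ### Norms in the field of order `q ^ 2` -/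

section FieldFacts

variable {h q : ℕ} {F : Type*} [Field F]

lemma herm_charTwo (hq : q = 2 ^ h) [Fintype F] (hF : Fintype.card F = q ^ 2) : CharP F 2 :=
  charP_of_card_eq_prime_pow (p := 2) (f := h * 2) (by rw [hF, hq, pow_mul])

lemma herm_add_pow (hq : q = 2 ^ h) [CharP F 2] (x y : F) :
    (x + y) ^ q = x ^ q + y ^ q := by
  subst hq; exact add_pow_char_pow x y 2 h

lemma herm_pow_pow [Fintype F] (hF : Fintype.card F = q ^ 2) (x : F) : (x ^ q) ^ q = x := by
  rw [← pow_mul, ← sq, ← hF, FiniteField.pow_card]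

lemma herm_card_units [Fintype F] (hF : Fintype.card F = q ^ 2) : Nat.card Fˣ = (q + 1) * (q - 1) := by
  classical
  rw [Nat.card_eq_fintype_card, Fintype.card_units, hF]
  simpa using Nat.sq_sub_sq q 1

/-- A nonzero element of the subfield of order `q` is a norm `x ^ (q + 1)`. -/
lemma herm_norm_surj (hq2 : 2 ≤ q) [Fintype F] (hF : Fintype.card F = q ^ 2) (b : F) (hb : b ≠ 0)
    (hbq : b ^ q = b) : ∃ x : F, x ≠ 0 ∧ x ^ (q + 1) = b := by
  obtain ⟨g, hg⟩ := IsCyclic.exists_zpow_surjective (G := Fˣ)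
  have hord : orderOf g = (q + 1) * (q - 1) := by
    rw [← herm_card_units hF]
    exact orderOf_eq_card_of_forall_mem_zpowers fun x => by
      obtain ⟨k, hk⟩ := hg x; exact ⟨k, hk⟩
  obtain ⟨k, hk⟩ := hg (Units.mk0 b hb)
  simp only at hk
  have h1 : (Units.mk0 b hb) ^ (q - 1) = 1 := by
    ext
    have : b ^ (q - 1) * b = 1 * b := by
      rw [← pow_succ, Nat.sub_add_cancel (by omega), hbq, one_mul]
    simpa using mul_right_cancel₀ hb this
  rw [← hk, ← zpow_natCast, ← _root_.zpow_mul, ← orderOf_dvd_iff_zpow_eq_one, hord] at h1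
  push_cast at h1
  have h2 : ((q : ℤ) + 1) ∣ k := by
    refine Int.dvd_of_mul_dvd_mul_right (a := ((q - 1 : ℕ) : ℤ)) ?_ h1
    have : q - 1 ≠ 0 := by omega
    exact_mod_cast this
  obtain ⟨m, rfl⟩ := h2
  refine ⟨((g ^ m : Fˣ) : F), Units.ne_zero _, ?_⟩
  have := congrArg (Units.val) hk
  rw [Units.val_mk0] at this
  rw [← this, ← Units.val_pow_eq_pow_val, ← zpow_natCast, ← _root_.zpow_mul]
  congr 2; push_cast; ring

lemma herm_card_mu [DecidableEq F] [Fintype F] (hF : Fintype.card F = q ^ 2) :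
    (Finset.univ.filter fun y : F => y ^ (q + 1) = 1).card = q + 1 := by
  have h1 := IsCyclic.card_powMonoidHom_ker (G := Fˣ) (q + 1)
  rw [herm_card_units hF, Nat.gcd_eq_right (Dvd.intro _ rfl)] at h1
  refine Eq.trans ?_ h1
  rw [← Fintype.card_subtype, ← Nat.card_eq_fintype_card]
  refine Nat.card_congr ⟨fun y => ⟨Units.mk0 y.1 ?_, ?_⟩, fun u => ⟨(u.1 : F), ?_⟩, ?_, ?_⟩
  · intro h0
    have := y.2
    simp [h0] at this
  · rw [MonoidHom.mem_ker]; ext; simpa using y.2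
  · have := u.2
    rw [MonoidHom.mem_ker] at this
    simpa using congrArg Units.val this
  · intro y; simp
  · intro u; simp

lemma herm_card_fibre [DecidableEq F] (hq2 : 2 ≤ q) [Fintype F] (hF : Fintype.card F = q ^ 2) (b : F)
    (hb : b ≠ 0) (hbq : b ^ q = b) :
    (Finset.univ.filter fun x : F => x ^ (q + 1) = b).card = q + 1 := by
  obtain ⟨x₀, h0, hx⟩ := herm_norm_surj hq2 hF b hb hbq
  refine Eq.trans ?_ (herm_card_mu (F := F) hF)
  refine Finset.card_bij' (fun x _ => x / x₀) (fun x _ => x * x₀) ?_ ?_ ?_ ?_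
  · intro x hx'
    simp only [Finset.mem_filter, Finset.mem_univ, true_and] at hx' ⊢
    rw [div_pow, hx', hx, div_self hb]
  · intro x hx'
    simp only [Finset.mem_filter, Finset.mem_univ, true_and] at hx' ⊢
    rw [mul_pow, hx', hx, one_mul]
  · intro x _; field_simp
  · intro x _; field_simp

lemma herm_card_affine [DecidableEq F] (hq : q = 2 ^ h) (hq2 : 2 ≤ q)
    [Fintype F] (hF : Fintype.card F = q ^ 2) :
    (Finset.univ.filter fun p : F × F => p.1 ^ (q + 1) - p.2 ^ (q + 1) = 1).card
      = (q + 1) * (q * (q - 1)) := by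
  have := herm_charTwo hq hF
  have inner : ∀ y : F, (∑ x : F, if x ^ (q + 1) - y ^ (q + 1) = 1 then 1 else 0)
      = if y ^ (q + 1) = 1 then 1 else q + 1 := by
    intro y
    rw [← Finset.card_filter]
    have key : ∀ x : F, x ^ (q + 1) - y ^ (q + 1) = 1 ↔ x ^ (q + 1) = 1 + y ^ (q + 1) :=
      fun x => sub_eq_iff_eq_add
    simp only [key]
    split_ifs with hy
    · rw [hy, CharTwo.add_self_eq_zero, Finset.card_eq_one]
      exact ⟨0, by ext x; simp⟩
    · apply herm_card_fibre hq2 hF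
      · intro h0; apply hy; rw [CharTwo.add_eq_zero] at h0; exact h0.symm
      · rw [herm_add_pow hq, one_pow, ← pow_mul, mul_comm, pow_mul, pow_succ, herm_pow_pow hF,
          pow_succ, mul_comm]
  rw [Finset.card_filter, Fintype.sum_prod_type_right]
  simp only [inner]
  rw [Finset.sum_ite, Finset.sum_const, Finset.sum_const, herm_card_mu hF]
  have h2 := Finset.card_filter_add_card_filter_not (s := Finset.univ)
    (fun y : F => y ^ (q + 1) = 1)
  rw [herm_card_mu hF, Finset.card_univ, hF] at h2
  obtain ⟨r, rfl⟩ := Nat.exists_eq_add_of_le hq2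
  have : (Finset.univ.filter fun y : F => ¬ y ^ (2 + r + 1) = 1).card = (2+r)*(1+r) - 1 := by
    apply Nat.add_left_cancel (n := 2 + r + 1)
    rw [h2]
    have : 1 ≤ (2+r)*(1+r) := by nlinarith
    zify [this]; ring
  rw [this]
  have : 1 ≤ (2+r)*(1+r) := by nlinarith
  have h3 : 2 + r - 1 = 1 + r := by omega
  rw [h3]
  simp only [smul_eq_mul]
  zify [this]; ring

end FieldFacts

/-! ### Fixed points on the projective plane and Burnside's lemma -/

section Projective

variable {q : ℕ} {F : Type*} [Field F]

lemma glAct_mk (M : GL (Fin 3) F) (v : Fin 3 → F) (hv : v ≠ 0)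
    (hMv : (M : Matrix (Fin 3) (Fin 3) F) *ᵥ v ≠ 0) :
    glAct M (Projectivization.mk F v hv) = Projectivization.mk F ((M : Matrix _ _ F) *ᵥ v) hMv := by
  unfold glAct
  rw [Projectivization.map_mk]
  rfl

lemma mulVec_ne_zero_of_GL (M : GL (Fin 3) F) (v : Fin 3 → F) (hv : v ≠ 0) :
    (M : Matrix (Fin 3) (Fin 3) F) *ᵥ v ≠ 0 := by
  intro h0
  apply hv
  have := congrArg (fun u => ((M⁻¹ : GL (Fin 3) F) : Matrix (Fin 3) (Fin 3) F) *ᵥ u) h0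
  simpa [Matrix.mulVec_mulVec, ← Units.val_mul] using this

lemma glAct_one (x : Projectivization F (Fin 3 → F)) : glAct (1 : GL (Fin 3) F) x = x := by
  induction x using Projectivization.ind with
  | h v hv =>
    rw [glAct_mk _ _ hv (mulVec_ne_zero_of_GL _ _ hv)]
    simp

lemma glAct_mul (M N : GL (Fin 3) F) (x : Projectivization F (Fin 3 → F)) :
    glAct (M * N) x = glAct M (glAct N x) := by
  induction x using Projectivization.ind with
  | h v hv =>
    have hN := mulVec_ne_zero_of_GL N v hv
    rw [glAct_mk _ _ hv (mulVec_ne_zero_of_GL _ _ hv), glAct_mk _ _ hv hN,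
      glAct_mk _ _ hN (mulVec_ne_zero_of_GL _ _ hN)]
    simp [Matrix.mulVec_mulVec]

lemma mk_mem_hermitianPts (v : Fin 3 → F) (hv : v ≠ 0) :
    Projectivization.mk F v hv ∈ hermitianPts q F ↔
      v 1 ^ (q + 1) = v 0 ^ (q + 1) - v 2 ^ (q + 1) := by
  obtain ⟨a, ha⟩ := Projectivization.exists_smul_eq_mk_rep F v hv
  have h0 : (a : F) ^ (q + 1) ≠ 0 := pow_ne_zero _ a.ne_zero
  simp only [hermitianPts, Set.mem_ofPred_eq, ← ha, Pi.smul_apply, Units.smul_def, smul_eq_mul,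
    mul_pow, ← mul_sub]
  exact mul_right_inj' h0

lemma affVec_ne_zero (p : F × F) : ![p.1, p.2, 1] ≠ 0 := fun h => by
  simpa using congrFun h 2

lemma infVec_ne_zero (y : F) : ![1, y, 0] ≠ 0 := fun h => by
  simpa using congrFun h 0

/-- The affine point `(x : y : 1)`. -/
def affPt (p : F × F) : Projectivization F (Fin 3 → F) :=
  Projectivization.mk F ![p.1, p.2, 1] (affVec_ne_zero p)

/-- The point `(1 : y : 0)` on the line at infinity. -/
def infPt (y : F) : Projectivization F (Fin 3 → F) :=
  Projectivization.mk F ![1, y, 0] (infVec_ne_zero y)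

/-- The affine Hermitian points `(x : y : 1)` whose vector `(x, y)` is fixed by the upper left
`2 × 2` block of `M`. -/
def fixAff (q : ℕ) (M : Matrix (Fin 3) (Fin 3) F) : Set (F × F) :=
  {p | p.1 ^ (q + 1) - p.2 ^ (q + 1) = 1 ∧ M 0 0 * p.1 + M 0 1 * p.2 = p.1 ∧
    M 1 0 * p.1 + M 1 1 * p.2 = p.2}

/-- The Hermitian points `(1 : y : 0)` at infinity for which `(1, y)` is an eigenvector of the
upper left `2 × 2` block of `M`. -/
def fixInf (q : ℕ) (M : Matrix (Fin 3) (Fin 3) F) : Set F :=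
  {y | y ^ (q + 1) = 1 ∧ M 1 0 + M 1 1 * y = y * (M 0 0 + M 0 1 * y)}

lemma affPt_injective : Function.Injective (affPt : F × F → _) := by
  intro p p' h
  rw [affPt, affPt, Projectivization.mk_eq_mk_iff'] at h
  obtain ⟨a, ha⟩ := h
  have h2 := congrFun ha 2
  have h1 := congrFun ha 1
  have h0 := congrFun ha 0
  simp at h0 h1 h2
  subst h2
  ext <;> simp_all

lemma infPt_injective : Function.Injective (infPt : F → _) := by
  intro p p' h
  rw [infPt, infPt, Projectivization.mk_eq_mk_iff'] at h
  obtain ⟨a, ha⟩ := h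
  have h1 := congrFun ha 1
  have h0 := congrFun ha 0
  simp at h0 h1
  subst h0
  simp_all

lemma affPt_ne_infPt (p : F × F) (y : F) : affPt p ≠ infPt y := by
  intro h
  rw [affPt, infPt, Projectivization.mk_eq_mk_iff'] at h
  obtain ⟨a, ha⟩ := h
  simpa using congrFun ha 2

lemma affPt_mem (p : F × F) :
    affPt p ∈ hermitianPts q F ↔ p.1 ^ (q + 1) - p.2 ^ (q + 1) = 1 := by
  rw [affPt, mk_mem_hermitianPts]
  simp
  constructor <;> intro h <;> linear_combination -h

lemma infPt_mem (y : F) : infPt y ∈ hermitianPts q F ↔ y ^ (q + 1) = 1 := by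
  rw [infPt, mk_mem_hermitianPts]
  simp

/-- The vector `(0, 1, 0)` is not isotropic, so every Hermitian point on the line at infinity has
the form `(1 : y : 0)`. -/
lemma exists_affPt_or_infPt (x : Projectivization F (Fin 3 → F)) (hx : x ∈ hermitianPts q F) :
    (∃ p, x = affPt p) ∨ ∃ y, x = infPt y := by
  induction x using Projectivization.ind with
  | h v hv =>
    rw [mk_mem_hermitianPts] at hx
    by_cases h2 : v 2 = 0
    · right
      have h0 : v 0 ≠ 0 := by
        intro h0
        apply hv
        simp [h0, h2] at hx
        ext i; fin_cases i <;> simp [h0, h2, hx]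
      refine ⟨v 1 / v 0, ?_⟩
      rw [infPt, Projectivization.mk_eq_mk_iff']
      refine ⟨v 0, ?_⟩
      ext i; fin_cases i
      · simp
      · simp; field_simp
      · simp [h2]
    · left
      refine ⟨(v 0 / v 2, v 1 / v 2), ?_⟩
      rw [affPt, Projectivization.mk_eq_mk_iff']
      refine ⟨v 2, ?_⟩
      ext i; fin_cases i
      · simp; field_simp
      · simp; field_simp
      · simp

/-- `M` is block diagonal with blocks of size `2` and `1`, the latter being `1`. -/
def IsBlock (M : Matrix (Fin 3) (Fin 3) F) : Prop :=
  M 0 2 = 0 ∧ M 1 2 = 0 ∧ M 2 0 = 0 ∧ M 2 1 = 0 ∧ M 2 2 = 1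

lemma glAct_affPt (M : GL (Fin 3) F) (hM : IsBlock (M : Matrix (Fin 3) (Fin 3) F)) (p : F × F) :
    glAct M (affPt p) = affPt ((M : Matrix (Fin 3) (Fin 3) F) 0 0 * p.1 +
      (M : Matrix (Fin 3) (Fin 3) F) 0 1 * p.2, (M : Matrix (Fin 3) (Fin 3) F) 1 0 * p.1 +
      (M : Matrix (Fin 3) (Fin 3) F) 1 1 * p.2) := by
  obtain ⟨h1, h2, h3, h4, h5⟩ := hM
  rw [affPt, glAct_mk _ _ _ (mulVec_ne_zero_of_GL _ _ (affVec_ne_zero p)), affPt]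
  congr 1
  ext i; fin_cases i <;> simp [Matrix.mulVec, dotProduct, Fin.sum_univ_three, *]

lemma glAct_infPt_eq (M : GL (Fin 3) F) (hM : IsBlock (M : Matrix (Fin 3) (Fin 3) F)) (y : F) :
    glAct M (infPt y) = infPt y ↔ (M : Matrix (Fin 3) (Fin 3) F) 1 0 +
      (M : Matrix (Fin 3) (Fin 3) F) 1 1 * y = y * ((M : Matrix (Fin 3) (Fin 3) F) 0 0 +
      (M : Matrix (Fin 3) (Fin 3) F) 0 1 * y) := by
  obtain ⟨h1, h2, h3, h4, h5⟩ := hM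
  rw [infPt, glAct_mk _ _ _ (mulVec_ne_zero_of_GL _ _ (infVec_ne_zero y)),
    Projectivization.mk_eq_mk_iff']
  constructor
  · rintro ⟨a, ha⟩
    have e0 := congrFun ha 0
    have e1 := congrFun ha 1
    simp [Matrix.mulVec, dotProduct, Fin.sum_univ_three] at e0 e1
    rw [← e0, ← e1]; ring
  · intro h
    refine ⟨(M : Matrix (Fin 3) (Fin 3) F) 0 0 + (M : Matrix (Fin 3) (Fin 3) F) 0 1 * y, ?_⟩
    ext i; fin_cases i
    · simp [Matrix.mulVec, dotProduct, Fin.sum_univ_three]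
    · simp [Matrix.mulVec, dotProduct, Fin.sum_univ_three]; rw [h]; ring
    · simp [Matrix.mulVec, dotProduct, Fin.sum_univ_three, *]

lemma fixedPts_eq (M : GL (Fin 3) F) (hM : IsBlock (M : Matrix (Fin 3) (Fin 3) F)) :
    {x | x ∈ hermitianPts q F ∧ glAct M x = x} =
      affPt '' fixAff q (M : Matrix (Fin 3) (Fin 3) F) ∪
        infPt '' fixInf q (M : Matrix (Fin 3) (Fin 3) F) := by
  ext x
  constructor
  · rintro ⟨hx, hfix⟩
    rcases exists_affPt_or_infPt x hx with ⟨p, rfl⟩ | ⟨y, rfl⟩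
    · left
      refine ⟨p, ?_, rfl⟩
      rw [glAct_affPt M hM] at hfix
      have := affPt_injective hfix
      exact ⟨(affPt_mem p).1 hx, congrArg Prod.fst this, congrArg Prod.snd this⟩
    · right
      exact ⟨y, ⟨(infPt_mem y).1 hx, (glAct_infPt_eq M hM y).1 hfix⟩, rfl⟩
  · rintro (⟨p, ⟨h1, h2, h3⟩, rfl⟩ | ⟨y, ⟨h1, h2⟩, rfl⟩)
    · refine ⟨(affPt_mem p).2 h1, ?_⟩
      rw [glAct_affPt M hM, h2, h3]
    · exact ⟨(infPt_mem y).2 h1, (glAct_infPt_eq M hM y).2 h2⟩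

lemma ncard_fixedPts [Finite F] (M : GL (Fin 3) F)
    (hM : IsBlock (M : Matrix (Fin 3) (Fin 3) F)) :
    {x | x ∈ hermitianPts q F ∧ glAct M x = x}.ncard =
      (fixAff q (M : Matrix (Fin 3) (Fin 3) F)).ncard +
        (fixInf q (M : Matrix (Fin 3) (Fin 3) F)).ncard := by
  rw [fixedPts_eq M hM, Set.ncard_union_eq ?_ (Set.toFinite _) (Set.toFinite _),
    Set.ncard_image_of_injective _ affPt_injective, Set.ncard_image_of_injective _ infPt_injective]
  rw [Set.disjoint_left]
  rintro _ ⟨p, _, rfl⟩ ⟨y, _, h⟩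
  exact affPt_ne_infPt p y h.symm

/-- Burnside's lemma for the action of `L` on an `L`-stable set `O`. -/
lemma burnside [Finite F] (L : Subgroup (GL (Fin 3) F)) (O : Set (Projectivization F (Fin 3 → F)))
    (hO : ∀ g ∈ L, ∀ x ∈ O, glAct g x ∈ O) [Fintype L] :
    ∑ g : L, {x | x ∈ O ∧ glAct (g : GL (Fin 3) F) x = x}.ncard
      = numOrbits L O * Nat.card L := by
  classical
  let _ : MulAction L O :=
    { smul := fun g x => ⟨glAct g x, hO g g.2 x x.2⟩
      one_smul := fun x => Subtype.ext (glAct_one _)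
      mul_smul := fun g g' x => Subtype.ext (glAct_mul _ _ _) }
  have hsmul : ∀ (g : L) (x : O), ((g • x : O) : Projectivization F (Fin 3 → F)) = glAct g x :=
    fun g x => rfl
  have : Finite (Projectivization F (Fin 3 → F)) := inferInstance
  let _ : Fintype O := Fintype.ofFinite _
  let _ : Fintype (Quotient (MulAction.orbitRel L O)) := Fintype.ofFinite _
  have hB := MulAction.sum_card_fixedBy_eq_card_orbits_mul_card_group L O
  rw [Nat.card_eq_fintype_card]
  have e1 : ∀ g : L, {x | x ∈ O ∧ glAct (g : GL (Fin 3) F) x = x}.ncard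
      = Fintype.card (MulAction.fixedBy O g) := by
    intro g
    rw [← Nat.card_eq_fintype_card, ← Nat.card_coe_set_eq]
    refine Nat.card_congr ⟨fun x => ⟨⟨x.1, x.2.1⟩, Subtype.ext x.2.2⟩,
      fun x => ⟨x.1.1, x.1.2, congrArg Subtype.val x.2⟩, fun _ => rfl, fun _ => rfl⟩
  have e2 : numOrbits L O = Fintype.card (Quotient (MulAction.orbitRel L O)) := by
    rw [← Nat.card_eq_fintype_card, numOrbits]
    symm
    have himg : ∀ x : O, {y | ∃ g ∈ L, glAct g x.1 = y} = Subtype.val '' MulAction.orbit L x := by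
      intro x
      ext y
      constructor
      · rintro ⟨g, hg, rfl⟩
        exact ⟨(⟨g, hg⟩ : L) • x, ⟨_, rfl⟩, rfl⟩
      · rintro ⟨_, ⟨g, rfl⟩, rfl⟩
        exact ⟨g, g.2, rfl⟩
    have hiff : ∀ x y : O, MulAction.orbitRel L O x y ↔
        {z | ∃ g ∈ L, glAct g x.1 = z} = {z | ∃ g ∈ L, glAct g y.1 = z} := by
      intro x y
      rw [himg, himg, Set.image_eq_image Subtype.val_injective, MulAction.orbit_eq_iff,
        MulAction.orbitRel_apply]
    refine Nat.card_eq_of_bijective (fun c => Quotient.lift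
      (fun x : O => (⟨_, x.1, x.2, rfl⟩ : ((fun x => {y | ∃ g ∈ L, glAct g x = y}) '' O :
        Set (Set (Projectivization F (Fin 3 → F))))))
      (fun x y hxy => Subtype.ext ((hiff x y).1 hxy)) c) ⟨?_, ?_⟩
    · intro c d
      induction c using Quotient.inductionOn
      induction d using Quotient.inductionOn
      intro h
      exact Quotient.sound ((hiff _ _).2 (congrArg Subtype.val h))
    · rintro ⟨_, x, hx, rfl⟩
      exact ⟨Quotient.mk _ ⟨x, hx⟩, rfl⟩
  rw [e2, ← hB]
  exact Finset.sum_congr rfl fun g _ => e1 g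

end Projective

/-! ### Fixed points of unitary matrices -/

section Unitary

variable {h q : ℕ} {F : Type*} [Field F]

lemma eq_one_of_coprime_pow {m n : ℕ} (hmn : Nat.Coprime m n) {x : F} (hm : x ^ m = 1)
    (hn : x ^ n = 1) : x = 1 := by
  have := Nat.dvd_gcd (orderOf_dvd_of_pow_eq_one hm) (orderOf_dvd_of_pow_eq_one hn)
  rw [hmn, Nat.dvd_one, orderOf_eq_one_iff] at this
  exact this

lemma isBlock_of_mem_MlSet {M : GL (Fin 3) F} (hM : M ∈ MlSet q F) :
    IsBlock (M : Matrix (Fin 3) (Fin 3) F) := by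
  obtain ⟨a, c, τ, _, _, hM⟩ := hM
  simp [IsBlock, hM]

lemma MlSet_preserves [Fintype F] [CharP F 2] (hq : q = 2 ^ h) (hF : Fintype.card F = q ^ 2)
    {M : GL (Fin 3) F} (hM : M ∈ MlSet q F) {x : Projectivization F (Fin 3 → F)}
    (hx : x ∈ hermitianPts q F) : glAct M x ∈ hermitianPts q F := by
  obtain ⟨a, c, τ, hac, hτ, hM⟩ := hM
  induction x using Projectivization.ind with
  | h v hv =>
    rw [mk_mem_hermitianPts] at hx
    rw [glAct_mk _ _ hv (mulVec_ne_zero_of_GL _ _ hv), mk_mem_hermitianPts, hM]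
    simp only [Matrix.mulVec, dotProduct, Fin.sum_univ_three, Matrix.of_apply, Matrix.cons_val,
      zero_mul, add_zero, zero_add, one_mul]
    simp only [pow_succ _ q, herm_add_pow hq, mul_pow, herm_pow_pow hF] at *
    linear_combination (τ * τ ^ q) * (a ^ q * a - c ^ q * c) * hx - (v 2 ^ q * v 2) * hac
      + (v 0 ^ q * v 0) * (a ^ q * a - c ^ q * c) * hτ - (v 2 ^ q * v 2) * (a ^ q * a - c ^ q * c) * hτ

/-- An element of `M_ℓ` whose order is prime to `q + 1` has determinant `τ = 1`. -/
lemma special_of_pow_eq_one {n : ℕ} (hn : Nat.Coprime n (q + 1)) {M : GL (Fin 3) F}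
    (hM : M ∈ MlSet q F) (hMn : M ^ n = 1) :
    ∃ a c : F, a ^ (q + 1) - c ^ (q + 1) = 1 ∧
      (M : Matrix (Fin 3) (Fin 3) F) = !![a, c ^ q, 0; c, a ^ q, 0; 0, 0, 1] := by
  obtain ⟨a, c, τ, hac, hτ, hM⟩ := hM
  have hdet : (M : Matrix (Fin 3) (Fin 3) F).det = τ := by
    rw [hM, Matrix.det_fin_three]
    simp
    linear_combination τ * hac
  have h1 : τ ^ n = 1 := by
    rw [← hdet, ← Matrix.det_pow, ← Units.val_pow_eq_pow_val, hMn]; simp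
  obtain rfl := eq_one_of_coprime_pow hn h1 hτ
  exact ⟨a, c, hac, by simpa using hM⟩

lemma eq_one_of_special {M : GL (Fin 3) F} {a c : F}
    (hM : (M : Matrix (Fin 3) (Fin 3) F) = !![a, c ^ q, 0; c, a ^ q, 0; 0, 0, 1])
    (hq0 : q ≠ 0) (ha : a = 1) (hc : c = 0) : M = 1 := by
  subst ha hc
  ext i j
  rw [hM]
  fin_cases i <;> fin_cases j <;> simp [hq0]

/-- In characteristic two an involution `[a, c, 1]` has trace `a + a ^ q = 0`, so its fixed points
at infinity are the solutions of `c ^ q * y ^ 2 = c`, which has exactly one solution. -/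
lemma ncard_fixInf_involution [Fintype F] [CharP F 2] (hq2 : 2 ≤ q)
    (hF : Fintype.card F = q ^ 2) {M : GL (Fin 3) F} {a c : F} (hac : a ^ (q + 1) - c ^ (q + 1) = 1)
    (hM : (M : Matrix (Fin 3) (Fin 3) F) = !![a, c ^ q, 0; c, a ^ q, 0; 0, 0, 1])
    (hM2 : M ^ 2 = 1) (hM1 : M ≠ 1) : (fixInf q (M : Matrix (Fin 3) (Fin 3) F)).ncard = 1 := by
  have two : (2 : F) = 0 := CharTwo.two_eq_zero
  have hsq : (M : Matrix (Fin 3) (Fin 3) F) * (M : Matrix (Fin 3) (Fin 3) F) = 1 := by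
    rw [← Units.val_mul, ← sq, hM2, Units.val_one]
  have e00 := congrFun (congrFun hsq 0) 0
  rw [hM] at e00
  simp [Matrix.mul_apply, Fin.sum_univ_three] at e00
  have haq : a ^ q = a := by
    have : a * (a ^ q - a) = 0 := by
      rw [pow_succ, pow_succ] at hac
      linear_combination hac - e00 + c ^ q * c * two
    rcases mul_eq_zero.1 this with h0 | h0
    · rw [h0, zero_pow (by omega)]
    · exact sub_eq_zero.1 h0
  have hc : c ≠ 0 := by
    intro hc
    apply hM1
    refine eq_one_of_special hM (by omega) ?_ hc
    rw [hc, mul_zero, add_zero] at e00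
    have : (a - 1) * (a - 1) = 0 := by linear_combination e00 - (a - 1) * two
    exact sub_eq_zero.1 (mul_self_eq_zero.1 this)
  have hcq : c ^ q ≠ 0 := pow_ne_zero _ hc
  obtain ⟨y, hy⟩ := FiniteField.isSquare_of_char_two (ringChar.eq F 2) (c / c ^ q)
  have hy' : c ^ q * (y * y) = c := by rw [← hy]; field_simp
  have sqinj : ∀ u v : F, u * u = v * v → u = v := by
    intro u v huv
    have : (u - v) * (u - v) = 0 := by linear_combination huv + (v * v - u * v) * two
    exact sub_eq_zero.1 (mul_self_eq_zero.1 this)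
  rw [Set.ncard_eq_one]
  refine ⟨y, ?_⟩
  ext z
  have hz : z ∈ fixInf q (M : Matrix (Fin 3) (Fin 3) F) ↔ z ^ (q + 1) = 1 ∧ c ^ q * (z * z) = c := by
    rw [hM]
    simp only [fixInf, Set.mem_ofPred_eq, Matrix.of_apply, Matrix.cons_val, haq]
    refine and_congr_right fun _ => ?_
    constructor <;> intro hh <;> linear_combination -hh
  rw [hz, Set.mem_singleton_iff]
  constructor
  · rintro ⟨_, h2⟩
    exact sqinj _ _ (mul_left_cancel₀ hcq (h2.trans hy'.symm))
  · rintro rfl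
    refine ⟨?_, hy'⟩
    apply sqinj
    rw [← mul_pow, ← hy, div_pow, pow_succ c, pow_succ (c ^ q), herm_pow_pow hF]
    field_simp

lemma ncard_fixInf_le_two [Finite F] [CharP F 2] (hq2 : 2 ≤ q) {M : GL (Fin 3) F} {a c : F}
    (hac : a ^ (q + 1) - c ^ (q + 1) = 1)
    (hM : (M : Matrix (Fin 3) (Fin 3) F) = !![a, c ^ q, 0; c, a ^ q, 0; 0, 0, 1])
    (hM1 : M ≠ 1) : (fixInf q (M : Matrix (Fin 3) (Fin 3) F)).ncard ≤ 2 := by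
  classical
  have two : (2 : F) = 0 := CharTwo.two_eq_zero
  let P : Polynomial F := Polynomial.C (c ^ q) * Polynomial.X ^ 2 +
    Polynomial.C (a - a ^ q) * Polynomial.X + Polynomial.C (-c)
  have hP : P ≠ 0 := by
    intro hP
    apply hM1
    have h0 : -c = 0 := by simpa [P] using congrArg (fun p => Polynomial.coeff p 0) hP
    have h1 : a - a ^ q = 0 := by
      have := congrArg (fun p => Polynomial.coeff p 1) hP
      simpa only [P, Polynomial.coeff_add, Polynomial.coeff_C_mul, Polynomial.coeff_X_pow,
        Polynomial.coeff_X_one, Polynomial.coeff_C_succ, Polynomial.coeff_zero, mul_one, add_zero,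
        OfNat.one_ne_ofNat, if_false, mul_zero, zero_add] using this
    have hc : c = 0 := neg_eq_zero.1 h0
    refine eq_one_of_special hM (by omega) ?_ hc
    rw [hc, zero_pow (by omega), pow_succ, ← sub_eq_zero.1 h1] at hac
    have : (a - 1) * (a - 1) = 0 := by linear_combination hac - (a - 1) * two
    exact sub_eq_zero.1 (mul_self_eq_zero.1 this)
  have hsub : fixInf q (M : Matrix (Fin 3) (Fin 3) F) ⊆ (P.roots.toFinset : Set F) := by
    intro y hy
    rw [hM] at hy
    have := hy.2
    simp only [Matrix.of_apply, Matrix.cons_val] at this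
    simp only [Finset.mem_coe, Multiset.mem_toFinset, Polynomial.mem_roots hP, Polynomial.IsRoot, P]
    simp
    linear_combination -this
  calc _ ≤ (P.roots.toFinset : Set F).ncard := Set.ncard_le_ncard hsub (Set.toFinite _)
    _ = P.roots.toFinset.card := Set.ncard_coe_finset _
    _ ≤ P.natDegree := (Multiset.toFinset_card_le _).trans (Polynomial.card_roots' _)
    _ ≤ 2 := Polynomial.natDegree_quadratic_le

lemma ZSet_mul_apply {z M : GL (Fin 3) F} {ε : F}
    (hz : (z : Matrix (Fin 3) (Fin 3) F) = Matrix.diagonal ![ε, ε, 1]) (i j : Fin 3) :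
    ((z * M : GL (Fin 3) F) : Matrix (Fin 3) (Fin 3) F) i j
      = ![ε, ε, 1] i * (M : Matrix (Fin 3) (Fin 3) F) i j := by
  rw [Units.val_mul, hz, Matrix.diagonal_mul]

lemma fixInf_ZSet_mul {z M : GL (Fin 3) F} (hz : z ∈ ZSet q F) :
    fixInf q ((z * M : GL (Fin 3) F) : Matrix (Fin 3) (Fin 3) F) =
      fixInf q (M : Matrix (Fin 3) (Fin 3) F) := by
  obtain ⟨ε, hε, hz⟩ := hz
  have hε0 : ε ≠ 0 := by rintro rfl; simp at hε
  ext y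
  simp only [fixInf, Set.mem_ofPred_eq, ZSet_mul_apply hz, Matrix.cons_val]
  refine and_congr_right fun _ => ?_
  constructor
  · intro hh
    apply mul_left_cancel₀ hε0
    linear_combination hh
  · intro hh
    linear_combination ε * hh

/-- If `z * g` fixes an affine Hermitian point, then `g` has the eigenvalue `ε⁻¹`, whose order
divides both `n` and `q + 1`; so `ε = 1`, and `g` fixes a nonisotropic vector. Having determinant
one, `g` is then the identity. -/
lemma eq_one_of_fixAff [Fintype F] [CharP F 2] (hq : q = 2 ^ h) (hq2 : 2 ≤ q)
    (hF : Fintype.card F = q ^ 2) {n : ℕ} (hn : Nat.Coprime n (q + 1)) {z g : GL (Fin 3) F}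
    (hz : z ∈ ZSet q F) (hg : g ∈ MlSet q F) (hgn : g ^ n = 1) {p : F × F}
    (hp : p ∈ fixAff q ((z * g : GL (Fin 3) F) : Matrix (Fin 3) (Fin 3) F)) : z = 1 ∧ g = 1 := by
  have two : (2 : F) = 0 := CharTwo.two_eq_zero
  obtain ⟨a, c, hac, hM⟩ := special_of_pow_eq_one hn hg hgn
  obtain ⟨ε, hε, hz⟩ := hz
  obtain ⟨x, y⟩ := p
  obtain ⟨h1, h2, h3⟩ := hp
  simp only [ZSet_mul_apply hz, hM, Matrix.of_apply, Matrix.cons_val] at h1 h2 h3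
  have hε0 : ε ≠ 0 := by rintro rfl; simp at hε
  have hxy : ![x, y, 0] ≠ 0 := by
    intro h0
    have hx : x = 0 := by simpa using congrFun h0 0
    have hy : y = 0 := by simpa using congrFun h0 1
    simp [hx, hy] at h1
  have hgv : (g : Matrix (Fin 3) (Fin 3) F) *ᵥ ![x, y, 0] = ε⁻¹ • ![x, y, 0] := by
    rw [eq_inv_smul_iff₀ hε0, hM]
    ext i; fin_cases i
    · simp; linear_combination h2
    · simp; linear_combination h3
    · simp
  have hpow : ∀ k : ℕ, ((g : Matrix (Fin 3) (Fin 3) F) ^ k) *ᵥ ![x, y, 0]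
      = (ε⁻¹) ^ k • ![x, y, 0] := by
    intro k
    induction k with
    | zero => simp
    | succ k ih =>
      rw [pow_succ, ← Matrix.mulVec_mulVec, hgv, Matrix.mulVec_smul, ih, smul_smul, pow_succ,
        mul_comm]
  have hεn : (ε⁻¹) ^ n = 1 := by
    have := hpow n
    rw [← Units.val_pow_eq_pow_val, hgn, Units.val_one, Matrix.one_mulVec] at this
    have h0 : ((ε⁻¹) ^ n - 1) • ![x, y, 0] = 0 := by rw [sub_smul, ← this, one_smul, sub_self]
    exact sub_eq_zero.1 ((smul_eq_zero.1 h0).resolve_right hxy)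
  have hε1 : ε = 1 := by
    rw [← inv_eq_one]
    exact eq_one_of_coprime_pow hn hεn (by rw [inv_pow, hε, inv_one])
  subst hε1
  constructor
  · ext i j
    rw [hz]; fin_cases i <;> fin_cases j <;> simp
  · simp only [one_mul] at h2 h3
    have h3q : c ^ q * x ^ q + a * y ^ q = y ^ q := by
      have := congrArg (· ^ q) h3
      simpa only [herm_add_pow hq, mul_pow, herm_pow_pow hF] using this
    have ha : a = 1 := by
      rw [pow_succ, pow_succ] at h1
      have h1' : x ^ q * x + y ^ q * y = 1 := by linear_combination h1 + y ^ q * y * two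
      linear_combination x ^ q * h2 + y * h3q - (c ^ q * x ^ q * y) * two - (a - 1) * h1'
    refine eq_one_of_special hM (by omega) ha ?_
    subst ha
    by_contra hc
    apply hxy
    have hx : x = 0 := by
      have : c * x = 0 := by rw [one_pow] at h3; linear_combination h3
      exact (mul_eq_zero.1 this).resolve_left hc
    have hy : y = 0 := by
      have : c ^ q * y = 0 := by linear_combination h2
      exact (mul_eq_zero.1 this).resolve_left (pow_ne_zero _ hc)
    rw [hx, hy]; ext i; fin_cases i <;> simp

lemma ncard_fixInf_one [Fintype F] (hF : Fintype.card F = q ^ 2) :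
    (fixInf q (1 : Matrix (Fin 3) (Fin 3) F)).ncard = q + 1 := by
  classical
  rw [← herm_card_mu hF, ← Set.ncard_coe_finset]
  congr 1
  ext y; simp [fixInf]

lemma ncard_fixAff_one [Fintype F] (hq : q = 2 ^ h) (hq2 : 2 ≤ q) (hF : Fintype.card F = q ^ 2) :
    (fixAff q (1 : Matrix (Fin 3) (Fin 3) F)).ncard = (q + 1) * (q * (q - 1)) := by
  classical
  rw [← herm_card_affine hq hq2 hF, ← Set.ncard_coe_finset]
  congr 1
  ext y; simp [fixAff]

end Unitary

/-! ### The center, the dihedral sum and the final arithmetic -/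

section Assembly

variable {q : ℕ} {F : Type*} [Field F]

/-- The group `Z` of matrices `diag(ε, ε, 1)` with `ε ^ (q + 1) = 1`. -/
def ZSub (q : ℕ) (F : Type*) [Field F] : Subgroup (GL (Fin 3) F) where
  carrier := ZSet q F
  one_mem' := ⟨1, one_pow _, by
    ext i j; fin_cases i <;> fin_cases j <;> simp⟩
  mul_mem' := by
    rintro z z' ⟨ε, hε, hz⟩ ⟨ε', hε', hz'⟩
    refine ⟨ε * ε', by rw [mul_pow, hε, hε', one_mul], ?_⟩
    rw [Units.val_mul, hz, hz', Matrix.diagonal_mul_diagonal]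
    congr 1
    ext i; fin_cases i <;> simp
  inv_mem' := by
    rintro z ⟨ε, hε, hz⟩
    have hε0 : ε ≠ 0 := by rintro rfl; simp at hε
    refine ⟨ε⁻¹, by rw [inv_pow, hε, inv_one], ?_⟩
    refine Units.inv_eq_of_mul_eq_one_right ?_
    rw [hz, Matrix.diagonal_mul_diagonal, ← Matrix.diagonal_one]
    congr 1
    ext i; fin_cases i <;> simp [hε0]

lemma ZSet_comm {z M : GL (Fin 3) F} (hz : z ∈ ZSet q F) (hM : M ∈ MlSet q F) :
    z * M = M * z := by
  obtain ⟨ε, _, hz⟩ := hz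
  obtain ⟨a, c, τ, _, _, hM⟩ := hM
  ext i j
  rw [Units.val_mul, Units.val_mul, hz, hM, Matrix.diagonal_mul, Matrix.mul_diagonal]
  fin_cases i <;> fin_cases j <;> simp [mul_comm]

/-- Each of the `t` reflections contributes `1`, the identity `m`, and the nontrivial rotations
together some `S ≤ 2(t - 1)`. -/
lemma dihedral_sum {t m : ℕ} [NeZero t] (φ : DihedralGroup t → ℕ) (h1 : φ 1 = m)
    (hs : ∀ i, φ (DihedralGroup.sr i) = 1) (h2 : ∀ d, d ≠ 1 → φ d ≤ 2) :
    ∃ S, S + 2 ≤ 2 * t ∧ ∑ d, φ d = m + t + S := by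
  have ht := NeZero.pos t
  refine ⟨∑ i ∈ Finset.univ.erase (0 : ZMod t), φ (DihedralGroup.r i), ?_, ?_⟩
  · have : ∑ i ∈ Finset.univ.erase (0 : ZMod t), φ (DihedralGroup.r i)
        ≤ (Finset.univ.erase (0 : ZMod t)).card • 2 := by
      refine Finset.sum_le_card_nsmul _ _ _ fun i hi => h2 _ ?_
      rw [DihedralGroup.one_def]
      intro h
      exact (Finset.mem_erase.1 hi).1 (DihedralGroup.r.inj h)
    rw [Finset.card_erase_of_mem (Finset.mem_univ _), Finset.card_univ, ZMod.card, smul_eq_mul]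
      at this
    omega
  · rw [← DihedralGroup.equivSum.symm.sum_comp, Fintype.sum_sum_type]
    have e1 : ∀ i : ZMod t, φ (DihedralGroup.equivSum.symm (Sum.inl i)) = φ (DihedralGroup.r i) :=
      fun _ => rfl
    have e2 : ∀ i : ZMod t, φ (DihedralGroup.equivSum.symm (Sum.inr i)) = 1 := hs
    simp only [e1, e2]
    rw [← Finset.add_sum_erase _ _ (Finset.mem_univ (0 : ZMod t)), DihedralGroup.r_zero, h1,
      Finset.sum_const, Finset.card_univ, ZMod.card]
    simp; ring

/-- Divisibility of the Burnside sum by the group order `2tw` forces `S = 2(t - 1)`: modulo `2t`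
the sum reads `S + 2 ≡ 0`, because `(q - 1) / t` is odd. -/
lemma orbit_arith {h q t w N S : ℕ} (hh : 1 ≤ h) (hq : q = 2 ^ h) (ht : t ∣ q - 1) (hw : w ∣ q + 1)
    (hS : S + 2 ≤ 2 * t)
    (hN : (q + 1) * (q * (q - 1)) + w * (q + 1 + t + S) = N * (w * (2 * t))) :
    (N : ℚ) = ((q : ℚ) - 1 + 3 * (t : ℚ)) / (2 * (t : ℚ))
        + ((q : ℚ) / 2) * (((q : ℚ) - 1) / (t : ℚ)) * (((q : ℚ) + 1) / (w : ℚ)) := by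
  obtain ⟨q', hq'⟩ : 2 ∣ q := hq ▸ dvd_pow_self 2 (by omega)
  have hq0 : 0 < q := hq ▸ by positivity
  obtain ⟨k, hk⟩ := ht
  obtain ⟨m, hm⟩ := hw
  have ht0 : 0 < t := by omega
  have hw0 : 0 < w := Nat.pos_of_ne_zero (by rintro rfl; omega)
  have hodd : Odd (t * k) := ⟨q' - 1, by omega⟩
  obtain ⟨k', hk'⟩ := (Nat.odd_mul.1 hodd).2
  have hqt : q = t * k + 1 := by omega
  have h1 : 2 * t * (q' * k * m) + (t * k + 2 + t + S) = N * (2 * t) := by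
    apply Nat.eq_of_mul_eq_mul_left hw0
    calc _ = (w * m) * ((2 * q') * (t * k)) + w * (t * k + 1 + 1 + t + S) := by ring
      _ = (q + 1) * (q * (q - 1)) + w * (q + 1 + t + S) := by rw [← hqt, ← hm, ← hq', ← hk]
      _ = _ := by rw [hN]; ring
  have h2 : 2 * t ∣ S + 2 := by
    have e : 2 * t * (q' * k * m) + (t * k + 2 + t + S)
        = 2 * t * (q' * k * m + k' + 1) + (S + 2) := by rw [hk']; ring
    rw [e] at h1
    exact (Nat.dvd_add_right (Dvd.intro _ rfl)).1 (h1 ▸ Dvd.intro_left _ rfl)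
  have h3 : S + 2 = 2 * t := le_antisymm hS (Nat.le_of_dvd (by omega) h2)
  have h4 : (N : ℚ) * (2 * t) = 2 * t * (q' * k * m) + (t * k + t + 2 * t) := by
    have : 2 * t * (q' * k * m) + (t * k + t + 2 * t) = N * (2 * t) := by omega
    exact_mod_cast this.symm
  have e1 : (q : ℚ) - 1 = t * k := by rw [hqt]; push_cast; ring
  have e2 : (q : ℚ) + 1 = w * m := by exact_mod_cast hm
  have e3 : (q : ℚ) = 2 * q' := by exact_mod_cast hq'
  have ht' : (t : ℚ) ≠ 0 := by positivity
  have hw' : (w : ℚ) ≠ 0 := by positivity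
  rw [e1, e2, e3]
  field_simp
  have h5 := mul_left_cancel₀ ht' (show (t : ℚ) * (N * 2) = t * (2 * (q' * k * m) + (k + 3)) by
    linear_combination h4)
  linear_combination h5

end Assembly

theorem stmt8 (h q t w : ℕ) (hh : 1 ≤ h) (hq : q = 2 ^ h)
    (F : Type*) [Field F] [Fintype F] (hF : Fintype.card F = q ^ 2)
    (ht : t ∣ q - 1) (hw : w ∣ q + 1)
    (L : Subgroup (GL (Fin 3) F)) (hLMl : (L : Set (GL (Fin 3) F)) ⊆ MlSet q F)
    (hZcard : Nat.card ((L : Set (GL (Fin 3) F)) ∩ ZSet q F : Set (GL (Fin 3) F)) = w)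
    (D : Subgroup (GL (Fin 3) F))
    (hDiso : Nonempty (↥D ≃* DihedralGroup t))
    (hgen : L = Subgroup.closure
      ((D : Set (GL (Fin 3) F)) ∪ ((L : Set (GL (Fin 3) F)) ∩ ZSet q F)))
    (htriv : (D : Set (GL (Fin 3) F)) ∩ ((L : Set (GL (Fin 3) F)) ∩ ZSet q F) ⊆ {1}) :
    (numOrbits L (hermitianPts q F) : ℚ)
      = ((q : ℚ) - 1 + 3 * (t : ℚ)) / (2 * (t : ℚ))
        + ((q : ℚ) / 2) * (((q : ℚ) - 1) / (t : ℚ)) * (((q : ℚ) + 1) / (w : ℚ)) := by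
  classical
  have hq2 : 2 ≤ q := hq ▸ Nat.le_self_pow (by omega) 2
  have hchar : CharP F 2 := herm_charTwo hq hF
  have ht0 : t ≠ 0 := by rintro rfl; rw [Nat.zero_dvd] at ht; omega
  have : NeZero t := ⟨ht0⟩
  obtain ⟨e⟩ := hDiso
  have hcop : Nat.Coprime (2 * t) (q + 1) := by
    have heven : 2 ∣ q := hq ▸ dvd_pow_self 2 (by omega)
    have hodd : Nat.Coprime 2 (q + 1) := by
      rw [Nat.coprime_two_left, Nat.odd_iff]; omega
    refine Nat.Coprime.mul_left hodd ?_
    refine Nat.Coprime.coprime_dvd_left ht ?_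
    have hd := Nat.dvd_sub (Nat.gcd_dvd_right (q - 1) (q + 1)) (Nat.gcd_dvd_left (q - 1) (q + 1))
    rw [show q + 1 - (q - 1) = 2 by omega] at hd
    exact Nat.Coprime.eq_one_of_dvd
      (hodd.symm.coprime_dvd_left (Nat.gcd_dvd_right (q - 1) (q + 1))) hd
  have hDL : D ≤ L := by
    intro g hg
    rw [hgen]
    exact Subgroup.subset_closure (Or.inl hg)
  have hcardD : Nat.card D = 2 * t := by
    rw [Nat.card_congr e.toEquiv, DihedralGroup.nat_card]
  have hDpow : ∀ g ∈ D, g ^ (2 * t) = 1 := by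
    intro g hg
    have : (⟨g, hg⟩ : D) ^ Nat.card D = 1 := pow_card_eq_one'
    rw [hcardD] at this
    exact congrArg Subtype.val this
  have hspec : ∀ g ∈ D, ∃ a c : F, a ^ (q + 1) - c ^ (q + 1) = 1 ∧
      (g : Matrix (Fin 3) (Fin 3) F) = !![a, c ^ q, 0; c, a ^ q, 0; 0, 0, 1] := fun g hg =>
    special_of_pow_eq_one hcop (hLMl (hDL hg)) (hDpow g hg)
  let Zl : Subgroup (GL (Fin 3) F) := L ⊓ ZSub q F
  have hZl : ∀ z, z ∈ Zl ↔ z ∈ L ∧ z ∈ ZSet q F := fun z => Iff.rfl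
  have hcardZ : Nat.card Zl = w := hZcard
  let _ : Fintype D := Fintype.ofFinite _
  let _ : Fintype L := Fintype.ofFinite _
  let _ : Fintype Zl := Fintype.ofFinite _
  -- The internal direct product decomposition of `L`.
  have hdecomp : ∀ x ∈ L, ∃ z ∈ Zl, ∃ g ∈ D, z * g = x := by
    intro x hx
    rw [hgen] at hx
    induction hx using Subgroup.closure_induction with
    | mem x hx =>
      rcases hx with hx | hx
      · exact ⟨1, one_mem _, x, hx, one_mul x⟩
      · exact ⟨x, hx, 1, one_mem _, mul_one x⟩
    | one => exact ⟨1, one_mem _, 1, one_mem _, one_mul 1⟩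
    | mul x y _ _ hx hy =>
      obtain ⟨z, hz, g, hg, rfl⟩ := hx
      obtain ⟨z', hz', g', hg', rfl⟩ := hy
      refine ⟨z * z', mul_mem hz hz', g * g', mul_mem hg hg', ?_⟩
      have := ZSet_comm hz'.2 (hLMl (hDL hg))
      rw [mul_assoc, ← mul_assoc z', this]
      group
    | inv x _ hx =>
      obtain ⟨z, hz, g, hg, rfl⟩ := hx
      refine ⟨z⁻¹, inv_mem hz, g⁻¹, inv_mem hg, ?_⟩
      have := ZSet_comm hz.2 (hLMl (hDL hg))
      rw [this, _root_.mul_inv_rev]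
  let ψ : Zl × D → L := fun p => ⟨p.1.1 * p.2.1, mul_mem p.1.2.1 (hDL p.2.2)⟩
  have hψ : Function.Bijective ψ := by
    constructor
    · rintro ⟨⟨z, hz⟩, ⟨g, hg⟩⟩ ⟨⟨z', hz'⟩, ⟨g', hg'⟩⟩ heq
      have h1 : z * g = z' * g' := congrArg Subtype.val heq
      have h2 : z'⁻¹ * z = g' * g⁻¹ := by
        rw [eq_mul_inv_iff_mul_eq, mul_assoc, h1, inv_mul_cancel_left]
      have h3 : z'⁻¹ * z = 1 :=
        htriv ⟨h2 ▸ mul_mem hg' (inv_mem hg), mul_mem (inv_mem hz') hz⟩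
      have h4 : z' = z := inv_mul_eq_one.1 h3
      subst h4
      have h5 : g = g' := mul_left_cancel h1
      subst h5
      rfl
    · rintro ⟨x, hx⟩
      obtain ⟨z, hz, g, hg, h⟩ := hdecomp x hx
      exact ⟨(⟨z, hz⟩, ⟨g, hg⟩), Subtype.ext h⟩
  have hcardL : Nat.card L = w * (2 * t) := by
    rw [← Nat.card_congr (Equiv.ofBijective ψ hψ), Nat.card_prod, hcardZ, hcardD]
  -- The fixed points at infinity, summed over the dihedral factor.
  obtain ⟨S, hS, hsum⟩ := dihedral_sum (m := q + 1)
    (fun d => (fixInf q ((e.symm d : GL (Fin 3) F) : Matrix (Fin 3) (Fin 3) F)).ncard)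
    (by simpa using ncard_fixInf_one hF)
    (by
      intro i
      obtain ⟨a, c, hac, hM⟩ := hspec _ (e.symm (DihedralGroup.sr i)).2
      refine ncard_fixInf_involution hq2 hF hac hM ?_ ?_
      · rw [← Subgroup.coe_pow, ← map_pow, sq, DihedralGroup.sr_mul_self, map_one,
          Subgroup.coe_one]
      · intro h1
        have h2 : e.symm (DihedralGroup.sr i) = 1 := Subtype.ext h1
        rw [map_eq_one_iff _ e.symm.injective, DihedralGroup.one_def] at h2
        exact DihedralGroup.noConfusion rfl (heq_of_eq h2))
    (by
      intro d hd
      obtain ⟨a, c, hac, hM⟩ := hspec _ (e.symm d).2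
      refine ncard_fixInf_le_two hq2 hac hM ?_
      intro h1
      exact hd ((map_eq_one_iff _ e.symm.injective).1 (Subtype.ext h1)))
  have hsumD : ∑ g : D, (fixInf q ((g : GL (Fin 3) F) : Matrix (Fin 3) (Fin 3) F)).ncard
      = q + 1 + t + S := by
    rw [← hsum]
    exact (e.symm.toEquiv.sum_comp
      fun g : D => (fixInf q ((g : GL (Fin 3) F) : Matrix (Fin 3) (Fin 3) F)).ncard).symm
  -- Only the identity fixes an affine Hermitian point.
  have hsumA : ∑ p : Zl × D,
      (fixAff q ((p.1.1 * p.2.1 : GL (Fin 3) F) : Matrix (Fin 3) (Fin 3) F)).ncard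
      = (q + 1) * (q * (q - 1)) := by
    rw [Finset.sum_eq_single (1 : Zl × D)]
    · simpa using ncard_fixAff_one hq hq2 hF
    · rintro ⟨⟨z, hz⟩, ⟨g, hg⟩⟩ _ hne
      rw [Set.ncard_eq_zero, Set.eq_empty_iff_forall_notMem]
      intro p hp
      obtain ⟨rfl, rfl⟩ := eq_one_of_fixAff hq hq2 hF hcop hz.2 (hLMl (hDL hg)) (hDpow g hg) hp
      exact hne rfl
    · intro h; exact absurd (Finset.mem_univ _) h
  have hB := burnside L (hermitianPts q F) fun g hg x hx => MlSet_preserves hq hF (hLMl hg) hx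
  rw [hcardL, ← hψ.sum_comp] at hB
  have hterm : ∀ p : Zl × D,
      {x | x ∈ hermitianPts q F ∧ glAct (ψ p : GL (Fin 3) F) x = x}.ncard =
        (fixAff q ((p.1.1 * p.2.1 : GL (Fin 3) F) : Matrix (Fin 3) (Fin 3) F)).ncard +
          (fixInf q ((p.2 : GL (Fin 3) F) : Matrix (Fin 3) (Fin 3) F)).ncard := by
    intro p
    rw [ncard_fixedPts _ (isBlock_of_mem_MlSet (hLMl (ψ p).2)),
      ← fixInf_ZSet_mul (M := p.2.1) p.1.2.2]
  rw [Finset.sum_congr rfl fun p _ => hterm p, Finset.sum_add_distrib, hsumA,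
    Fintype.sum_prod_type] at hB
  simp only [hsumD] at hB
  rw [Finset.sum_const, Finset.card_univ, ← Nat.card_eq_fintype_card, hcardZ, smul_eq_mul] at hB
  exact orbit_arith hh hq ht hw hS hB
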